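/- Let 𝒮₀ be a nonempty decreasing subset of 𝒮 with 𝒮₀≠𝒮, and let 0<δ₁<δ₂. Then there exists N=N(δ₁,δ₂) such that for all n>N, P_{v₁}(T_{𝒮₀}(δ₁)>n) < P_{v₁}(T_{𝒮₀}(δ₂)>n). -/

import Mathlib

open scoped BigOperators Classical ENNReal
open Filter Topology

noncomputable section
namespace ORRW

/-- Probability measures on a finite type `A`, topologized as a subset of `ℝ^A`. -/
abbrev ProbMeas (A : Type) [Fintype A] : Type :=
  {p : A → ℝ // (∀ a, 0 ≤ p a) ∧ ∑ a, p a = 1}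

/-- Relative entropy `R(γ‖ρ)` between two finitely supported "rows", valued in `EReal`,
with `+∞` when absolute continuity fails. -/
def relEnt {A : Type} [Fintype A] (γ ρ : A → ℝ) : EReal :=
  if ∀ a, ρ a = 0 → γ a = 0 then ((∑ a, γ a * Real.log (γ a / ρ a) : ℝ) : EReal)
  else (⊤ : EReal)

/-- `∫ R(q‖p) dν = Σ_a ν(a) · R(q(a,·)‖p(a,·))`. -/
def relEntInt {A : Type} [Fintype A] (ν : A → ℝ) (q p : A → A → ℝ) : EReal :=
  ∑ a, (ν a : EReal) * relEnt (q a) (p a)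

/-- `ν` is an invariant measure of the kernel `q`. -/
def Invariant {A : Type} [Fintype A] (ν : A → ℝ) (q : A → A → ℝ) : Prop :=
  ∀ y, ∑ x, ν x * q x y = ν y

/-- Extended-real logarithm: `⊥` at nonpositive arguments. -/
def elog (x : ℝ) : EReal := if x ≤ 0 then (⊥ : EReal) else ((Real.log x : ℝ) : EReal)

/-- Empirical measure of a finite trajectory `f : Fin (n+1) → A`. -/
def empMeas {A : Type} [Fintype A] [DecidableEq A] (n : ℕ) (f : Fin (n + 1) → A) :
    ProbMeas A :=
  ⟨fun a => ((Finset.univ.filter (fun i => f i = a)).card : ℝ) / (n + 1),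
    fun a => by positivity, by
      have key : ∑ a : A, ((Finset.univ.filter (fun i => f i = a)).card) = n + 1 := by
        have h := Finset.card_eq_sum_card_fiberwise
          (s := (Finset.univ : Finset (Fin (n + 1)))) (t := (Finset.univ : Finset A))
          (f := f) (fun i _ => Finset.mem_univ (f i))
        simpa using h.symm
      have key' : ∑ a : A, (((Finset.univ.filter (fun i => f i = a)).card : ℝ)) = (n : ℝ) + 1 := by
        have h2 := congrArg (fun m : ℕ => (m : ℝ)) key
        push_cast at h2
        simpa using h2
      rw [← Finset.sum_div, key', div_self (by positivity)]⟩

section Graph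

variable {V : Type} [Fintype V] [DecidableEq V]

/-- Weight of an edge given the set `F` of already traversed edges. -/
def gw (δ : ℝ) (F : Finset (Sym2 V)) (e : Sym2 V) : ℝ := if e ∈ F then δ else 1

/-- The transition kernel `p̂_F` on `V`. -/
def phat (G : SimpleGraph V) [DecidableRel G.Adj] (δ : ℝ) (F : Finset (Sym2 V))
    (x y : V) : ℝ :=
  if G.Adj x y then gw δ F s(x, y) / ∑ z ∈ G.neighborFinset x, gw δ F s(x, z) else 0

/-- Two edges are adjacent iff they share a vertex. -/
def edgeAdj (e e' : Sym2 V) : Prop := ∃ v, v ∈ e ∧ v ∈ e'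

/-- `x` is a vertex of the edge set `F`. -/
def memVerts (F : Finset (Sym2 V)) (x : V) : Prop := ∃ e ∈ F, x ∈ e

/-- `𝒯_G`: stochastic matrices on `V` adapted to `G`. -/
def TG (G : SimpleGraph V) : Set (V → V → ℝ) :=
  {q | (∀ x y, 0 ≤ q x y) ∧ (∀ x, ∑ y, q x y = 1) ∧ ∀ x y, q x y ≠ 0 → G.Adj x y}

/-- `𝒯(F)`: stochastic kernels from the vertex set of `F` to `V`, supported on `F`. -/
def TE (F : Finset (Sym2 V)) : Set (V → V → ℝ) :=
  {q | (∀ x y, 0 ≤ q x y) ∧ (∀ x, memVerts F x → ∑ y, q x y = 1) ∧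
    ∀ x y, q x y ≠ 0 → s(x, y) ∈ F}

/-- `ℰ`: admissible increasing sequences of traversed edge sets. -/
def seqE (G : SimpleGraph V) [DecidableRel G.Adj] (v₁ : V) :
    Set (Fin G.edgeFinset.card → Finset (Sym2 V)) :=
  {Es | (∀ k, Es k ⊆ G.edgeFinset) ∧ (∀ k, (Es k).card = (k : ℕ) + 1) ∧
    (∀ k l : Fin G.edgeFinset.card, (k : ℕ) + 1 = (l : ℕ) → Es k ⊂ Es l) ∧
    (∀ k : Fin G.edgeFinset.card, (k : ℕ) = 0 → ∃ e ∈ Es k, v₁ ∈ e) ∧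
    (∀ k l : Fin G.edgeFinset.card, (k : ℕ) + 1 = (l : ℕ) →
      ∀ e ∈ Es l \ Es k, ∃ e' ∈ Es k, edgeAdj e e')}

/-- The rate function `I_δ`. -/
def Ifun (G : SimpleGraph V) [DecidableRel G.Adj] (v₁ : V) (δ : ℝ) (ν : ProbMeas V) : EReal :=
  sInf { c : EReal |
    ∃ (νs : Fin G.edgeFinset.card → ProbMeas V) (r : Fin G.edgeFinset.card → ℝ)
      (Es : Fin G.edgeFinset.card → Finset (Sym2 V))
      (qs : Fin G.edgeFinset.card → V → V → ℝ),
      Es ∈ seqE G v₁ ∧ (∀ k, 0 ≤ r k) ∧ (∑ k, r k = 1) ∧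
      (∀ k x, (νs k).1 x ≠ 0 → memVerts (Es k) x) ∧
      (∀ x, ∑ k, r k * (νs k).1 x = ν.1 x) ∧
      (∀ k, qs k ∈ TE (Es k)) ∧ (∀ k, Invariant (νs k).1 (qs k)) ∧
      c = ∑ k, ((r k : ℝ) : EReal) * relEntInt (νs k).1 (qs k) (phat G δ (Es k)) }

/-- Edges traversed along a path, given as a list of consecutively visited vertices. -/
def pathEdges : List V → Finset (Sym2 V)
  | [] => ∅
  | [_] => ∅
  | x :: y :: t => insert s(x, y) (pathEdges (y :: t))

/-- Product of one-step ORRW transition probabilities along a trajectory,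
the trajectory being listed in reverse chronological order. -/
def stepsProb (G : SimpleGraph V) [DecidableRel G.Adj] (δ : ℝ) : List V → ℝ
  | [] => 1
  | [_] => 1
  | y :: x :: t => phat G δ (pathEdges (x :: t).reverse) x y * stepsProb G δ (x :: t)

/-- The law of `(X_0, …, X_n)` for the `δ`-ORRW started at `v₁`. -/
def trajProb (G : SimpleGraph V) [DecidableRel G.Adj] (δ : ℝ) (v₁ : V) (n : ℕ)
    (f : Fin (n + 1) → V) : ℝ :=
  if f 0 = v₁ then stepsProb G δ (List.ofFn f).reverse else 0

/-- `P_{v₁}(L_{n+1} ∈ C)`: the probability that the empirical measure of the first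
`n+1` positions of the `δ`-ORRW lies in `C`. -/
def probEmp (G : SimpleGraph V) [DecidableRel G.Adj] (δ : ℝ) (v₁ : V) (n : ℕ)
    (C : Set (ProbMeas V)) : ℝ :=
  ∑ f : Fin (n + 1) → V, if empMeas n f ∈ C then trajProb G δ v₁ n f else 0

/-- The family `𝒮` of edge sets of connected subgraphs having an edge at `v₁`. -/
def scrS (G : SimpleGraph V) [DecidableRel G.Adj] (v₁ : V) : Set (Finset (Sym2 V)) :=
  {F | F ⊆ G.edgeFinset ∧ (∃ e ∈ F, v₁ ∈ e) ∧
    ∀ x y : V, memVerts F x → memVerts F y →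
      (SimpleGraph.fromEdgeSet (↑F : Set (Sym2 V))).Reachable x y}

/-- `𝒮₀` is a decreasing subset of `𝒮`. -/
def DecreasingIn (G : SimpleGraph V) [DecidableRel G.Adj] (v₁ : V)
    (S0 : Set (Finset (Sym2 V))) : Prop :=
  ∀ F₁ F₂, F₁ ∈ scrS G v₁ → F₂ ∈ scrS G v₁ → F₁ ⊆ F₂ → F₂ ∈ S0 → F₁ ∈ S0

/-- `P_{v₁}(T_{𝒮₀} > n)`. -/
def probTgt (G : SimpleGraph V) [DecidableRel G.Adj] (δ : ℝ) (v₁ : V)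
    (S0 : Set (Finset (Sym2 V))) (n : ℕ) : ℝ :=
  ∑ f : Fin (n + 1) → V,
    if ∀ k, 1 ≤ k → k ≤ n → pathEdges ((List.ofFn f).take (k + 1)) ∈ S0 then
      trajProb G δ v₁ n f
    else 0

/-- `P_{v₁}(C_E > n)` for the edge cover time `C_E`. -/
def probCgt (G : SimpleGraph V) [DecidableRel G.Adj] (δ : ℝ) (v₁ : V) (n : ℕ) : ℝ :=
  ∑ f : Fin (n + 1) → V,
    if ¬ G.edgeFinset ⊆ pathEdges (List.ofFn f) then trajProb G δ v₁ n f else 0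

/-- `E_{v₁}[exp (α T_{𝒮₀})]`, valued in `ℝ≥0∞`; the stopping time takes values in
`{1, 2, …} ∪ {∞}`. -/
def expT (G : SimpleGraph V) [DecidableRel G.Adj] (δ : ℝ) (v₁ : V)
    (S0 : Set (Finset (Sym2 V))) (α : ℝ) : ℝ≥0∞ :=
  (∑' n : ℕ, ENNReal.ofReal
      (Real.exp (α * (n + 1)) * (probTgt G δ v₁ S0 n - probTgt G δ v₁ S0 (n + 1)))) +
    (if 0 < α then (⊤ : ℝ≥0∞) else if α = 0 then 1 else 0) *
      ENNReal.ofReal (⨅ n : ℕ, probTgt G δ v₁ S0 n)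

/-- `E_{v₁}[exp (α C_E)]`, valued in `ℝ≥0∞`. -/
def expC (G : SimpleGraph V) [DecidableRel G.Adj] (δ : ℝ) (v₁ : V) (α : ℝ) : ℝ≥0∞ :=
  (∑' n : ℕ, ENNReal.ofReal
      (Real.exp (α * (n + 1)) * (probCgt G δ v₁ n - probCgt G δ v₁ (n + 1)))) +
    (if 0 < α then (⊤ : ℝ≥0∞) else if α = 0 then 1 else 0) *
      ENNReal.ofReal (⨅ n : ℕ, probCgt G δ v₁ n)

/-- The critical exponent `α_c(δ)` attached to a family `𝒮₀` of edge sets. -/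
def alphaC (G : SimpleGraph V) [DecidableRel G.Adj] (δ : ℝ)
    (S0 : Set (Finset (Sym2 V))) : EReal :=
  sInf { c : EReal | ∃ (ν : ProbMeas V) (F : Finset (Sym2 V)) (q : V → V → ℝ),
    F ∈ S0 ∧ q ∈ TE F ∧ (∀ x, ν.1 x ≠ 0 → memVerts F x) ∧ Invariant ν.1 q ∧
    c = relEntInt ν.1 q (phat G δ F) }

/-- `α_c^1(δ)`: the critical exponent for the cover time. -/
def alphaC1 (G : SimpleGraph V) [DecidableRel G.Adj] (v₁ : V) (δ : ℝ) : EReal :=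
  alphaC G δ (scrS G v₁ \ {G.edgeFinset})

end Graph

section Lifted

variable {V : Type} [Fintype V] [LinearOrder V]

/-- Smaller endpoint of an unordered pair. -/
def sym2lo (e : Sym2 V) : V := Sym2.lift ⟨fun a b => min a b, fun a b => min_comm a b⟩ e

/-- Larger endpoint of an unordered pair. -/
def sym2hi (e : Sym2 V) : V := Sym2.lift ⟨fun a b => max a b, fun a b => max_comm a b⟩ e

/-- `V_S = E × {-1, 1}`: vertex set of the lifted directed graph `S`
(`true` plays the role of `+1`). -/
abbrev VSet (G : SimpleGraph V) [DecidableRel G.Adj] : Type :=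
  {e : Sym2 V // e ∈ G.edgeFinset} × Bool

/-- Tail `z⁻` of an oriented edge. -/
def zm (G : SimpleGraph V) [DecidableRel G.Adj] (z : VSet G) : V :=
  if z.2 then sym2lo z.1.1 else sym2hi z.1.1

/-- Head `z⁺` of an oriented edge. -/
def zp (G : SimpleGraph V) [DecidableRel G.Adj] (z : VSet G) : V :=
  if z.2 then sym2hi z.1.1 else sym2lo z.1.1

/-- The kernel `p_F` on the lifted directed graph `S`. -/
def pS (G : SimpleGraph V) [DecidableRel G.Adj] (δ : ℝ) (F : Finset (Sym2 V))
    (z₁ z₂ : VSet G) : ℝ :=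
  if zp G z₁ = zm G z₂ then
    gw δ F z₂.1.1 / ∑ w : VSet G, (if zp G z₁ = zm G w then gw δ F w.1.1 else 0)
  else 0

/-- `𝒯_S`: stochastic matrices on `V_S` moving along orientations. -/
def TS (G : SimpleGraph V) [DecidableRel G.Adj] : Set (VSet G → VSet G → ℝ) :=
  {q | (∀ z w, 0 ≤ q z w) ∧ (∀ z, ∑ w, q z w = 1) ∧ ∀ z w, q z w ≠ 0 → zp G z = zm G w}

/-- `𝒞(𝒮₀)`: probability measures on `V_S` whose first marginal is supported in
some member of `𝒮₀`. -/
def CC (G : SimpleGraph V) [DecidableRel G.Adj] (S0 : Set (Finset (Sym2 V))) :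
    Set (ProbMeas (VSet G)) :=
  {μ | ∃ F ∈ S0, ∀ z : VSet G, μ.1 z ≠ 0 → z.1.1 ∈ F}

/-- `Λ_{δ,𝒮₀}`. -/
def Lam (G : SimpleGraph V) [DecidableRel G.Adj] (v₁ : V) (δ : ℝ)
    (S0 : Set (Finset (Sym2 V))) (μ : ProbMeas (VSet G)) : EReal :=
  sInf { c : EReal |
    ∃ (μs : Fin G.edgeFinset.card → ProbMeas (VSet G)) (r : Fin G.edgeFinset.card → ℝ)
      (Es : Fin G.edgeFinset.card → Finset (Sym2 V))
      (qs : Fin G.edgeFinset.card → VSet G → VSet G → ℝ),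
      Es ∈ seqE G v₁ ∧ (∀ k, 0 ≤ r k) ∧ (∀ k, Es k ∉ S0 → r k = 0) ∧ (∑ k, r k = 1) ∧
      (∀ k z, (μs k).1 z ≠ 0 → z.1.1 ∈ Es k) ∧
      (∀ z, ∑ k, r k * (μs k).1 z = μ.1 z) ∧
      (∀ k, qs k ∈ TS G) ∧ (∀ k, Invariant (μs k).1 (qs k)) ∧
      c = ∑ k, ((r k : ℝ) : EReal) * relEntInt (μs k).1 (qs k) (pS G δ (Es k)) }

/-- `Λ^z_{δ,𝒮₀}`. -/
def LamZ (G : SimpleGraph V) [DecidableRel G.Adj] (v₁ : V) (δ : ℝ)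
    (S0 : Set (Finset (Sym2 V))) (z : VSet G) (μ : ProbMeas (VSet G)) : EReal :=
  sInf { c : EReal |
    ∃ (μs : Fin G.edgeFinset.card → ProbMeas (VSet G)) (r : Fin G.edgeFinset.card → ℝ)
      (Es : Fin G.edgeFinset.card → Finset (Sym2 V))
      (qs : Fin G.edgeFinset.card → VSet G → VSet G → ℝ),
      Es ∈ seqE G v₁ ∧ (∀ k : Fin G.edgeFinset.card, (k : ℕ) = 0 → Es k = {z.1.1}) ∧
      (∀ k, 0 ≤ r k) ∧ (∀ k, Es k ∉ S0 → r k = 0) ∧ (∑ k, r k = 1) ∧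
      (∀ k w, (μs k).1 w ≠ 0 → w.1.1 ∈ Es k) ∧
      (∀ w, ∑ k, r k * (μs k).1 w = μ.1 w) ∧
      (∀ k, qs k ∈ TS G) ∧ (∀ k, Invariant (μs k).1 (qs k)) ∧
      c = ∑ k, ((r k : ℝ) : EReal) * relEntInt (μs k).1 (qs k) (pS G δ (Es k)) }

/-- `Λ₁`: the Donsker–Varadhan functional for the simple random walk on `S`
(whose kernel is `pS` with `δ = 1`). -/
def Lam1 (G : SimpleGraph V) [DecidableRel G.Adj] (μ : ProbMeas (VSet G)) : EReal :=
  sInf { c : EReal | ∃ q ∈ TS G, Invariant μ.1 q ∧ c = relEntInt μ.1 q (pS G 1 ∅) }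

/-- Boundary `∂F` of an edge set: edges of `F` adjacent to some edge outside `F`. -/
def bdry (G : SimpleGraph V) [DecidableRel G.Adj] (F : Finset (Sym2 V)) : Finset (Sym2 V) :=
  F.filter fun e => ∃ e' ∈ G.edgeFinset \ F, edgeAdj e e'

/-- Out-degree `d(z)` of `z` in `S`. -/
def outDeg (G : SimpleGraph V) [DecidableRel G.Adj] (z : VSet G) : ℕ :=
  (Finset.univ.filter (fun w : VSet G => zp G z = zm G w)).card

/-- Number `k(z)` of out-neighbours of `z` lying in `F × {-1, 1}`. -/
def outDegIn (G : SimpleGraph V) [DecidableRel G.Adj] (F : Finset (Sym2 V))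
    (z : VSet G) : ℕ :=
  (Finset.univ.filter (fun w : VSet G => zp G z = zm G w ∧ w.1.1 ∈ F)).card

/-- The law of `(Z_0, …, Z_n)` for the lifted `δ`-ORRW conditioned on `Z_0 = z`. -/
def liftTraj (G : SimpleGraph V) [DecidableRel G.Adj] (δ : ℝ) (z : VSet G) (n : ℕ)
    (g : Fin (n + 1) → VSet G) : ℝ :=
  if g 0 = z then
    ∏ i : Fin n,
      pS G δ ((Finset.Iic i.castSucc).image (fun j => (g j).1.1))
        (g i.castSucc) (g i.succ)
  else 0

/-- The restricted logarithmic Laplace functional `W^{n+1}_{𝒮₀}(z)`. -/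
def Wres (G : SimpleGraph V) [DecidableRel G.Adj] (δ : ℝ) (z : VSet G)
    (S0 : Set (Finset (Sym2 V))) (h : ProbMeas (VSet G) → ℝ) (n : ℕ) : EReal :=
  if 0 < ∑ g : Fin (n + 1) → VSet G,
      (if empMeas n g ∈ CC G S0 then liftTraj G δ z n g else 0) then
    ((-((((n : ℝ) + 1))⁻¹ * Real.log (∑ g : Fin (n + 1) → VSet G,
      if empMeas n g ∈ CC G S0 then
        Real.exp (-((n : ℝ) + 1) * h (empMeas n g)) * liftTraj G δ z n g
      else 0)) : ℝ) : EReal)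
  else (⊤ : EReal)

end Lifted

section PF

open Matrix

theorem pow_pos_aux {V : Type} [Fintype V] [DecidableEq V] (Q : Matrix V V ℝ)
    (hQ : ∀ x y, 0 ≤ Q x y) (u : V → ℝ) (hu : ∀ x, 0 ≤ u x) (A : Set V)
    (hirr : ∀ x ∈ A, ∀ y ∈ A, Relation.ReflTransGen (fun a b => 0 < Q a b) x y)
    (x0 : V) (hx0A : x0 ∈ A) (hx0 : 0 < u x0) :
    (∀ k x, 0 ≤ (((1 + Q) ^ k) *ᵥ u) x) ∧
    ∃ K, ∀ k, K ≤ k → ∀ x ∈ A, 0 < (((1 + Q) ^ k) *ᵥ u) x := by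
  have step : ∀ k x, (((1 + Q) ^ (k+1)) *ᵥ u) x =
      (((1 + Q) ^ k) *ᵥ u) x + ∑ y, Q x y * (((1 + Q) ^ k) *ᵥ u) y := by
    intro k x
    rw [pow_succ', ← mulVec_mulVec, add_mulVec, one_mulVec]
    rfl
  have hnn : ∀ k x, 0 ≤ (((1 + Q) ^ k) *ᵥ u) x := by
    intro k
    induction k with
    | zero => intro x; simpa using hu x
    | succ k ih =>
      intro x
      rw [step]
      exact add_nonneg (ih x) (Finset.sum_nonneg fun y _ => mul_nonneg (hQ x y) (ih y))
  refine ⟨hnn, ?_⟩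
  have h1 : ∀ x, Relation.ReflTransGen (fun a b => 0 < Q a b) x x0 →
      ∃ K, ∀ k, K ≤ k → 0 < (((1 + Q) ^ k) *ᵥ u) x := by
    intro x hx
    induction hx using Relation.ReflTransGen.head_induction_on with
    | refl =>
      refine ⟨0, fun k _ => ?_⟩
      induction k with
      | zero => simpa using hx0
      | succ k ih =>
        rw [step]
        exact add_pos_of_pos_of_nonneg (ih (Nat.zero_le _))
          (Finset.sum_nonneg fun y _ => mul_nonneg (hQ _ y) (hnn k y))
    | head hab _ ih =>
      obtain ⟨K, hK⟩ := ih
      refine ⟨K + 1, fun k hk => ?_⟩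
      obtain ⟨j, rfl⟩ : ∃ j, k = j + 1 := ⟨k - 1, by omega⟩
      rw [step]
      refine add_pos_of_nonneg_of_pos (hnn _ _) ?_
      exact Finset.sum_pos' (fun y _ => mul_nonneg (hQ _ y) (hnn j y))
        ⟨_, Finset.mem_univ _, mul_pos hab (hK j (by omega))⟩
  have h2 : ∀ x, ∃ K, x ∈ A → ∀ k, K ≤ k → 0 < (((1 + Q) ^ k) *ᵥ u) x := by
    intro x
    by_cases hx : x ∈ A
    · obtain ⟨K, hK⟩ := h1 x (hirr x hx x0 hx0A)
      exact ⟨K, fun _ => hK⟩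
    · exact ⟨0, fun h => absurd h hx⟩
  choose K hK using h2
  refine ⟨Finset.univ.sup K, fun k hk x hx => hK x hx k (le_trans ?_ hk)⟩
  exact Finset.le_sup (Finset.mem_univ x)

theorem improve {V : Type} [Fintype V] [DecidableEq V] (Q : Matrix V V ℝ)
    (hQ : ∀ x y, 0 ≤ Q x y) (A : Set V) (hQA : ∀ x y, Q x y ≠ 0 → x ∈ A)
    (hirr : ∀ x ∈ A, ∀ y ∈ A, Relation.ReflTransGen (fun a b => 0 < Q a b) x y)
    (h : V → ℝ) (hh : ∀ x, 0 ≤ h x) (hA : ∀ x, x ∉ A → h x = 0) (s : ℝ) (hs : 0 ≤ s)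
    (hsub : ∀ x, s * h x ≤ (Q *ᵥ h) x) (x0 : V) (hx0 : s * h x0 < (Q *ᵥ h) x0) :
    ∃ g : V → ℝ, (∀ x ∈ A, 0 < g x) ∧ (∀ x, x ∉ A → g x = 0) ∧
      ∃ ε > 0, ∀ x, (s + ε) * g x ≤ (Q *ᵥ g) x := by
  have hpos : 0 < ∑ y, Q x0 y * h y :=
    lt_of_le_of_lt (mul_nonneg hs (hh x0)) hx0
  obtain ⟨y0, -, hy0⟩ := Finset.exists_ne_zero_of_sum_ne_zero hpos.ne'
  have hx0A : x0 ∈ A := hQA x0 y0 (left_ne_zero_of_mul hy0)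
  have hy0A : y0 ∈ A := by
    by_contra hc
    exact right_ne_zero_of_mul hy0 (hA y0 hc)
  have hy0p : 0 < h y0 := lt_of_le_of_ne (hh y0) (right_ne_zero_of_mul hy0).symm
  set u : V → ℝ := Q *ᵥ h - s • h with hu
  have hu0 : ∀ x, 0 ≤ u x := fun x => by
    simp only [hu, Pi.sub_apply, Pi.smul_apply, smul_eq_mul]; linarith [hsub x]
  have hux0 : 0 < u x0 := by
    simp only [hu, Pi.sub_apply, Pi.smul_apply, smul_eq_mul]; linarith
  obtain ⟨n1, K1, hK1⟩ := pow_pos_aux Q hQ u hu0 A hirr x0 hx0A hux0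
  obtain ⟨n2, K2, hK2⟩ := pow_pos_aux Q hQ h hh A hirr y0 hy0A hy0p
  set k := max K1 K2
  set g := ((1 + Q) ^ k) *ᵥ h with hg
  have hcomm : Q *ᵥ g - s • g = ((1 + Q) ^ k) *ᵥ u := by
    rw [hu, hg, mulVec_sub, mulVec_mulVec, mulVec_mulVec, mulVec_smul]
    congr 2
    exact (((Commute.one_right Q).add_right (Commute.refl Q)).pow_right k).eq
  have hg0 : ∀ x, x ∉ A → g x = 0 := by
    intro x hx
    have hrow : ∀ w : V → ℝ, (Q *ᵥ w) x = 0 := by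
      intro w
      refine Finset.sum_eq_zero fun y _ => ?_
      by_cases hq : Q x y = 0
      · show Q x y * w y = 0
        rw [hq, zero_mul]
      · exact absurd (hQA x y hq) hx
    have : ∀ k, (((1 + Q) ^ k) *ᵥ h) x = 0 := by
      intro k
      induction k with
      | zero => simpa using hA x hx
      | succ k ih =>
        rw [pow_succ', ← mulVec_mulVec, add_mulVec, one_mulVec, Pi.add_apply, ih, hrow, zero_add]
    exact this k
  have hgp : ∀ x ∈ A, 0 < g x := hK2 k (le_max_right _ _)
  have hup : ∀ x ∈ A, 0 < (((1 + Q) ^ k) *ᵥ u) x := hK1 k (le_max_left _ _)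
  refine ⟨g, hgp, hg0, ?_⟩
  -- epsilon
  have hfin : ∃ ε > 0, ∀ x ∈ A, ε * g x ≤ (((1 + Q) ^ k) *ᵥ u) x := by
    have hne : (Finset.univ : Finset V).Nonempty := ⟨x0, Finset.mem_univ _⟩
    classical
    let r : V → ℝ := fun x => if x ∈ A then (((1 + Q) ^ k) *ᵥ u) x / g x else 1
    obtain ⟨z, -, hz⟩ := Finset.exists_min_image Finset.univ r hne
    refine ⟨r z, ?_, fun x hx => ?_⟩
    · simp only [r]; split_ifs with hzA
      · exact div_pos (hup z hzA) (hgp z hzA)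
      · exact one_pos
    · have := hz x (Finset.mem_univ x)
      have h2 : r x = (((1 + Q) ^ k) *ᵥ u) x / g x := by simp only [r, if_pos hx]
      rw [h2, le_div_iff₀ (hgp x hx)] at this
      exact this
  obtain ⟨ε, hε, hle⟩ := hfin
  refine ⟨ε, hε, fun x => ?_⟩
  have e := congrFun hcomm x
  simp only [Pi.sub_apply, Pi.smul_apply, smul_eq_mul] at e
  by_cases hx : x ∈ A
  · have := hle x hx
    rw [add_mul]; linarith
  · have h3 : (((1 + Q) ^ k) *ᵥ u) x ≥ 0 := n1 k x
    rw [hg0 x hx] at e ⊢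
    linarith

theorem perron {V : Type} [Fintype V] [DecidableEq V] (Q : Matrix V V ℝ)
    (hQ : ∀ x y, 0 ≤ Q x y) (A : Set V) (hQA : ∀ x y, Q x y ≠ 0 → x ∈ A)
    (hirr : ∀ x ∈ A, ∀ y ∈ A, Relation.ReflTransGen (fun a b => 0 < Q a b) x y)
    (hne : A.Nonempty) :
    ∃ s : ℝ, 0 ≤ s ∧ ∃ h : V → ℝ, (∀ x ∈ A, 0 < h x) ∧ (∀ x, x ∉ A → h x = 0) ∧
      ∀ x, (Q *ᵥ h) x = s * h x := by
  set B : ℝ := ∑ x, ∑ y, Q x y with hB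
  have hB0 : 0 ≤ B := Finset.sum_nonneg fun x _ => Finset.sum_nonneg fun y _ => hQ x y
  let K : Set (ℝ × (V → ℝ)) := (Set.Icc 0 B ×ˢ stdSimplex ℝ V) ∩
    ((⋂ x, {p : ℝ × (V → ℝ) | x ∉ A → p.2 x = 0}) ∩
      ⋂ x, {p : ℝ × (V → ℝ) | p.1 * p.2 x ≤ (Q *ᵥ p.2) x})
  have hK : IsCompact K := by
    refine (isCompact_Icc.prod (isCompact_stdSimplex ℝ V)).inter_right (IsClosed.inter ?_ ?_)
    · refine isClosed_iInter fun x => ?_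
      by_cases hx : x ∈ A
      · simp [hx]
      · simp only [hx, not_false_eq_true, forall_true_left]
        exact isClosed_eq (by fun_prop) (by fun_prop)
    · refine isClosed_iInter fun x => ?_
      refine isClosed_le (by fun_prop) ?_
      unfold mulVec dotProduct
      fun_prop
  obtain ⟨a, ha⟩ := hne
  have hKne : K.Nonempty := by
    refine ⟨(0, Pi.single a 1), ⟨⟨⟨le_rfl, hB0⟩, ?_⟩, ?_, ?_⟩⟩
    · exact single_mem_stdSimplex ℝ a
    · refine Set.mem_iInter.2 fun x => ?_
      intro hx
      have : x ≠ a := fun h => hx (h ▸ ha)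
      simp [this]
    · refine Set.mem_iInter.2 fun x => ?_
      simp [hQ]
  obtain ⟨⟨s, h⟩, hmem, hmax⟩ := hK.exists_isMaxOn hKne continuous_fst.continuousOn
  have hmem' := hmem
  obtain ⟨⟨⟨hs0, hsB⟩, hh0, hh1⟩, hA, hsub⟩ := hmem
  simp only [Set.mem_iInter, Set.mem_ofPred_eq] at hA hsub hs0 hsB hh0 hh1
  have heig : ∀ x, (Q *ᵥ h) x = s * h x := by
    by_contra hcon
    push Not at hcon
    obtain ⟨x0, hx0⟩ := hcon
    obtain ⟨g, hgp, hg0, ε, hε, hg⟩ := improve Q hQ A hQA hirr h hh0 hA s hs0 hsub x0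
      (lt_of_le_of_ne (hsub x0) (Ne.symm hx0))
    have hgnn : ∀ x, 0 ≤ g x := fun x => by
      by_cases hx : x ∈ A
      · exact (hgp x hx).le
      · exact (hg0 x hx).ge
    set m := ∑ x, g x with hm
    have hmp : 0 < m := Finset.sum_pos' (fun x _ => hgnn x) ⟨a, Finset.mem_univ _, hgp a ha⟩
    have hgm : ∀ x, g x ≤ m := fun x =>
      Finset.single_le_sum (fun y _ => hgnn y) (Finset.mem_univ x)
    have hin : (s + ε, m⁻¹ • g) ∈ K := by
      refine ⟨⟨⟨by positivity, ?_⟩, ?_, ?_⟩, ?_, ?_⟩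
      · have : (s + ε) * m ≤ B * m := by
          rw [hm, Finset.mul_sum, ← hm, hB, Finset.sum_mul]
          refine Finset.sum_le_sum fun x _ => (hg x).trans ?_
          rw [Finset.sum_mul]
          exact Finset.sum_le_sum fun y _ => mul_le_mul_of_nonneg_left (hgm y) (hQ x y)
        exact le_of_mul_le_mul_right this hmp
      · intro x
        exact mul_nonneg (inv_nonneg.2 hmp.le) (hgnn x)
      · simp only [Pi.smul_apply, smul_eq_mul]
        rw [← Finset.mul_sum]
        exact inv_mul_cancel₀ hmp.ne'
      · refine Set.mem_iInter.2 fun x => ?_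
        intro hx
        simp [hg0 x hx]
      · refine Set.mem_iInter.2 fun x => ?_
        simp only [Set.mem_ofPred_eq, mulVec_smul, Pi.smul_apply, smul_eq_mul]
        have := mul_le_mul_of_nonneg_left (hg x) (inv_nonneg.2 hmp.le)
        linarith
    have := hmax hin
    simp only [Set.mem_ofPred_eq] at this
    linarith
  refine ⟨s, hs0, h, ?_, hA, heig⟩
  obtain ⟨x0, hx0⟩ : ∃ x0, 0 < h x0 := by
    by_contra hc
    push Not at hc
    have : ∑ x, h x ≤ 0 := Finset.sum_nonpos fun x _ => hc x
    linarith
  have hx0A : x0 ∈ A := by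
    by_contra hc
    rw [hA x0 hc] at hx0
    exact lt_irrefl _ hx0
  obtain ⟨-, k, hk⟩ := pow_pos_aux Q hQ h hh0 A hirr x0 hx0A hx0
  have hpow : ∀ k, ((1 + Q) ^ k) *ᵥ h = (1 + s) ^ k • h := by
    intro k
    induction k with
    | zero => simp
    | succ k ih =>
      rw [pow_succ', ← mulVec_mulVec, ih, mulVec_smul, add_mulVec, one_mulVec]
      ext x
      simp only [Pi.smul_apply, Pi.add_apply, smul_eq_mul, heig x]
      ring
  intro x hx
  have := hk k le_rfl x hx
  rw [hpow] at this
  exact pos_of_mul_pos_right this (by positivity)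

end PF

section Chain

set_option linter.unusedSectionVars false

variable {V : Type} [Fintype V] [DecidableEq V]

/-- One-step operator of the chain killed on leaving `S0`. -/
def opP (G : SimpleGraph V) [DecidableRel G.Adj] (δ : ℝ) (S0 : Set (Finset (Sym2 V)))
    (φ : V → Finset (Sym2 V) → ℝ) (x : V) (F : Finset (Sym2 V)) : ℝ :=
  ∑ y, if insert s(x, y) F ∈ S0 then phat G δ F x y * φ y (insert s(x, y) F) else 0

/-- Expectation of a test function on the event that the chain is still alive. -/
def Ex (G : SimpleGraph V) [DecidableRel G.Adj] (δ : ℝ) (v₁ : V)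
    (S0 : Set (Finset (Sym2 V))) (n : ℕ) (φ : V → Finset (Sym2 V) → ℝ) : ℝ :=
  ∑ f : Fin (n + 1) → V,
    if ∀ k, 1 ≤ k → k ≤ n → pathEdges ((List.ofFn f).take (k + 1)) ∈ S0 then
      trajProb G δ v₁ n f * φ (f (Fin.last n)) (pathEdges (List.ofFn f))
    else 0

theorem pathEdges_snoc (l : List V) (x y : V) :
    pathEdges (l ++ [x] ++ [y]) = insert s(x, y) (pathEdges (l ++ [x])) := by
  induction l with
  | nil => simp [pathEdges]
  | cons a t ih =>
    cases t with
    | nil =>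
      simp only [pathEdges, List.cons_append, List.nil_append]
      rw [Finset.insert_comm]
    | cons b t =>
      simp only [List.cons_append, pathEdges] at ih ⊢
      rw [ih, Finset.insert_comm]

theorem ofFn_last {n : ℕ} (f : Fin (n + 1) → V) :
    List.ofFn f = List.ofFn (fun i => f (Fin.castSucc i)) ++ [f (Fin.last n)] := by
  rw [List.ofFn_succ', List.concat_eq_append]

theorem ofFn_snoc {n : ℕ} (f : Fin (n + 1) → V) (y : V) :
    List.ofFn (Fin.snoc f y : Fin (n + 2) → V) = List.ofFn f ++ [y] := by
  rw [ofFn_last]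
  simp

theorem Ex_zero (G : SimpleGraph V) [DecidableRel G.Adj] (δ : ℝ) (v₁ : V)
    (S0 : Set (Finset (Sym2 V))) (φ : V → Finset (Sym2 V) → ℝ) :
    Ex G δ v₁ S0 0 φ = φ v₁ ∅ := by
  unfold Ex
  rw [Finset.sum_eq_single (fun _ => v₁)]
  · rw [if_pos]
    · simp [trajProb, stepsProb, pathEdges]
    · intro k h1 h2; omega
  · intro f _ hf
    have : f 0 ≠ v₁ := fun h => hf (by
      ext i
      have hi : i = 0 := Fin.ext (by have := i.2; simp)
      rw [hi, h])
    simp [trajProb, this]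
  · intro h; exact absurd (Finset.mem_univ _) h

theorem Ex_succ (G : SimpleGraph V) [DecidableRel G.Adj] (δ : ℝ) (v₁ : V)
    (S0 : Set (Finset (Sym2 V))) (n : ℕ) (φ : V → Finset (Sym2 V) → ℝ) :
    Ex G δ v₁ S0 (n + 1) φ = Ex G δ v₁ S0 n (opP G δ S0 φ) := by
  unfold Ex
  rw [← (Fin.snocEquiv (fun _ : Fin (n + 2) => V)).sum_comp, Fintype.sum_prod_type_right]
  refine Finset.sum_congr rfl fun f _ => ?_
  have hlen : (List.ofFn f).length = n + 1 := by simp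
  have hpe : ∀ y, pathEdges (List.ofFn f ++ [y]) =
      insert s(f (Fin.last n), y) (pathEdges (List.ofFn f)) := by
    intro y
    rw [ofFn_last f, pathEdges_snoc]
  have hcond : ∀ y, (∀ k, 1 ≤ k → k ≤ n + 1 →
      pathEdges ((List.ofFn f ++ [y]).take (k + 1)) ∈ S0) ↔
      ((∀ k, 1 ≤ k → k ≤ n → pathEdges ((List.ofFn f).take (k + 1)) ∈ S0) ∧
        insert s(f (Fin.last n), y) (pathEdges (List.ofFn f)) ∈ S0) := by
    intro y
    constructor
    · intro h
      refine ⟨fun k h1 h2 => ?_, ?_⟩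
      · have := h k h1 (by omega)
        rwa [List.take_append_of_le_length (by omega)] at this
      · have := h (n + 1) (by omega) le_rfl
        rwa [List.take_of_length_le (by simp), hpe] at this
    · rintro ⟨ha, hb⟩ k h1 h2
      by_cases hk : k ≤ n
      · rw [List.take_append_of_le_length (by omega)]
        exact ha k h1 hk
      · rw [List.take_of_length_le (by simp; omega), hpe]
        exact hb
  have htraj : ∀ y, trajProb G δ v₁ (n + 1) (Fin.snoc f y : Fin (n + 2) → V) =
      trajProb G δ v₁ n f * phat G δ (pathEdges (List.ofFn f)) (f (Fin.last n)) y := by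
    intro y
    unfold trajProb
    rw [ofFn_snoc]
    have h0 : (Fin.snoc f y : Fin (n + 2) → V) 0 = f 0 := by
      simp
    rw [h0]
    by_cases hf : f 0 = v₁
    · rw [if_pos hf, if_pos hf]
      have hr : (List.ofFn f).reverse = f (Fin.last n) ::
          (List.ofFn (fun i => f (Fin.castSucc i))).reverse := by
        rw [ofFn_last f]; simp
      rw [List.reverse_append, List.reverse_singleton, List.singleton_append, hr, stepsProb,
        ← hr, List.reverse_reverse, mul_comm]
    · rw [if_neg hf, if_neg hf, zero_mul]
  simp only [Fin.snocEquiv, Equiv.coe_fn_mk]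
  have e1 : ∀ y, (fun i => (Fin.snoc f y : Fin (n + 2) → V) i) = Fin.snoc f y := fun _ => rfl
  simp only [ofFn_snoc, htraj, hcond, hpe, Fin.snoc_last]
  by_cases hc : ∀ k, 1 ≤ k → k ≤ n → pathEdges ((List.ofFn f).take (k + 1)) ∈ S0
  · rw [if_pos hc]
    unfold opP
    rw [Finset.mul_sum]
    refine Finset.sum_congr rfl fun y _ => ?_
    by_cases hy : insert s(f (Fin.last n), y) (pathEdges (List.ofFn f)) ∈ S0
    · rw [if_pos ⟨hc, hy⟩, if_pos hy, mul_assoc]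
    · rw [if_neg (fun h => hy h.2), if_neg hy, mul_zero]
  · rw [if_neg hc]
    exact Finset.sum_eq_zero fun y _ => if_neg (fun h => hc h.1)

theorem gw_pos {δ : ℝ} (hδ : 0 < δ) (F : Finset (Sym2 V)) (e : Sym2 V) : 0 < gw δ F e := by
  unfold gw; split_ifs <;> positivity

theorem gwsum_nonneg (G : SimpleGraph V) [DecidableRel G.Adj] {δ : ℝ} (hδ : 0 < δ)
    (F : Finset (Sym2 V)) (x : V) : 0 ≤ ∑ z ∈ G.neighborFinset x, gw δ F s(x, z) :=
  Finset.sum_nonneg fun _ _ => (gw_pos hδ F _).le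

theorem gwsum_pos (G : SimpleGraph V) [DecidableRel G.Adj] {δ : ℝ} (hδ : 0 < δ)
    (F : Finset (Sym2 V)) {x y : V} (h : G.Adj x y) :
    0 < ∑ z ∈ G.neighborFinset x, gw δ F s(x, z) :=
  Finset.sum_pos (fun _ _ => gw_pos hδ F _) ⟨y, by simpa using h⟩

theorem phat_nonneg (G : SimpleGraph V) [DecidableRel G.Adj] {δ : ℝ} (hδ : 0 < δ)
    (F : Finset (Sym2 V)) (x y : V) : 0 ≤ phat G δ F x y := by
  unfold phat
  split_ifs
  · exact div_nonneg (gw_pos hδ F _).le (gwsum_nonneg G hδ F x)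
  · exact le_rfl

theorem phat_pos (G : SimpleGraph V) [DecidableRel G.Adj] {δ : ℝ} (hδ : 0 < δ)
    (F : Finset (Sym2 V)) {x y : V} (h : G.Adj x y) : 0 < phat G δ F x y := by
  unfold phat
  rw [if_pos h]
  exact div_pos (gw_pos hδ F _) (gwsum_pos G hδ F h)

theorem phat_le_one (G : SimpleGraph V) [DecidableRel G.Adj] {δ : ℝ} (hδ : 0 < δ)
    (F : Finset (Sym2 V)) (x y : V) : phat G δ F x y ≤ 1 := by
  unfold phat
  split_ifs with h
  · refine div_le_one_of_le₀ ?_ (gwsum_nonneg G hδ F x)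
    exact Finset.single_le_sum (f := fun z => gw δ F s(x, z))
      (fun z _ => (gw_pos hδ F _).le) (by simpa using h)
  · exact zero_le_one

theorem phat_mono (G : SimpleGraph V) [DecidableRel G.Adj] {δ₁ δ₂ : ℝ} (h1 : 0 < δ₁)
    (h12 : δ₁ < δ₂) (F : Finset (Sym2 V)) {x y : V} (hF : s(x, y) ∈ F) :
    phat G δ₁ F x y ≤ phat G δ₂ F x y := by
  have h2 : 0 < δ₂ := h1.trans h12
  unfold phat
  split_ifs with h
  · rw [div_le_div_iff₀ (gwsum_pos G h1 F h) (gwsum_pos G h2 F h)]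
    have e1 : gw δ₁ F s(x, y) = δ₁ := if_pos hF
    have e2 : gw δ₂ F s(x, y) = δ₂ := if_pos hF
    rw [e1, e2, Finset.mul_sum, Finset.mul_sum]
    refine Finset.sum_le_sum fun z _ => ?_
    unfold gw
    split_ifs <;> nlinarith
  · exact le_rfl

theorem phat_strict (G : SimpleGraph V) [DecidableRel G.Adj] {δ₁ δ₂ : ℝ} (h1 : 0 < δ₁)
    (h12 : δ₁ < δ₂) (F : Finset (Sym2 V)) {x y z : V} (hF : s(x, y) ∈ F) (h : G.Adj x y)
    (hz : G.Adj x z) (hzF : s(x, z) ∉ F) :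
    phat G δ₁ F x y < phat G δ₂ F x y := by
  have h2 : 0 < δ₂ := h1.trans h12
  unfold phat
  rw [if_pos h, if_pos h, div_lt_div_iff₀ (gwsum_pos G h1 F h) (gwsum_pos G h2 F h)]
  have e1 : gw δ₁ F s(x, y) = δ₁ := if_pos hF
  have e2 : gw δ₂ F s(x, y) = δ₂ := if_pos hF
  rw [e1, e2, Finset.mul_sum, Finset.mul_sum]
  refine Finset.sum_lt_sum (fun z _ => ?_) ⟨z, by simpa using hz, ?_⟩
  · unfold gw
    split_ifs <;> nlinarith
  · unfold gw
    rw [if_neg hzF, if_neg hzF]; linarith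

theorem trajProb_nonneg (G : SimpleGraph V) [DecidableRel G.Adj] {δ : ℝ} (hδ : 0 < δ) (v₁ : V)
    (n : ℕ) (f : Fin (n + 1) → V) : 0 ≤ trajProb G δ v₁ n f := by
  have : ∀ l : List V, 0 ≤ stepsProb G δ l := by
    intro l
    induction l with
    | nil => simp [stepsProb]
    | cons a t ih =>
      cases t with
      | nil => simp [stepsProb]
      | cons b t => exact mul_nonneg (phat_nonneg G hδ _ _ _) ih
  unfold trajProb
  split_ifs
  · exact this _
  · exact le_rfl

theorem Ex_mono (G : SimpleGraph V) [DecidableRel G.Adj] {δ : ℝ} (hδ : 0 < δ) (v₁ : V)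
    (S0 : Set (Finset (Sym2 V))) (n : ℕ) (φ ψ : V → Finset (Sym2 V) → ℝ)
    (h : ∀ x F, φ x F ≤ ψ x F) : Ex G δ v₁ S0 n φ ≤ Ex G δ v₁ S0 n ψ := by
  unfold Ex
  refine Finset.sum_le_sum fun f _ => ?_
  split_ifs
  · exact mul_le_mul_of_nonneg_left (h _ _) (trajProb_nonneg G hδ v₁ n f)
  · exact le_rfl

theorem Ex_smul (G : SimpleGraph V) [DecidableRel G.Adj] (δ : ℝ) (v₁ : V)
    (S0 : Set (Finset (Sym2 V))) (n : ℕ) (φ : V → Finset (Sym2 V) → ℝ) (c : ℝ) :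
    Ex G δ v₁ S0 n (fun x F => c * φ x F) = c * Ex G δ v₁ S0 n φ := by
  unfold Ex
  rw [Finset.mul_sum]
  refine Finset.sum_congr rfl fun f _ => ?_
  split_ifs
  · ring
  · ring

theorem Ex_one (G : SimpleGraph V) [DecidableRel G.Adj] (δ : ℝ) (v₁ : V)
    (S0 : Set (Finset (Sym2 V))) (n : ℕ) :
    Ex G δ v₁ S0 n (fun _ _ => 1) = probTgt G δ v₁ S0 n := by
  unfold Ex probTgt
  simp

theorem Ex_iter (G : SimpleGraph V) [DecidableRel G.Adj] (δ : ℝ) (v₁ : V)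
    (S0 : Set (Finset (Sym2 V))) (n : ℕ) (φ : V → Finset (Sym2 V) → ℝ) :
    Ex G δ v₁ S0 n φ = (opP G δ S0)^[n] φ v₁ ∅ := by
  induction n generalizing φ with
  | zero => rw [Ex_zero]; rfl
  | succ n ih => rw [Ex_succ, ih]; rfl

theorem Ex_upper (G : SimpleGraph V) [DecidableRel G.Adj] {δ : ℝ} (hδ : 0 < δ) (v₁ : V)
    (S0 : Set (Finset (Sym2 V))) (H : V → Finset (Sym2 V) → ℝ) (r : ℝ) (hr : 0 ≤ r)
    (h : ∀ x F, opP G δ S0 H x F ≤ r * H x F) (n : ℕ) :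
    Ex G δ v₁ S0 n H ≤ r ^ n * H v₁ ∅ := by
  induction n with
  | zero => rw [Ex_zero]; simp
  | succ n ih =>
    rw [Ex_succ]
    refine (Ex_mono G hδ v₁ S0 n _ _ h).trans ?_
    rw [Ex_smul, pow_succ', mul_assoc]
    exact mul_le_mul_of_nonneg_left ih hr

theorem Ex_lower (G : SimpleGraph V) [DecidableRel G.Adj] {δ : ℝ} (hδ : 0 < δ) (v₁ : V)
    (S0 : Set (Finset (Sym2 V))) (H : V → Finset (Sym2 V) → ℝ) (r : ℝ) (hr : 0 ≤ r)
    (h : ∀ x F, r * H x F ≤ opP G δ S0 H x F) (k n : ℕ) :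
    r ^ n * Ex G δ v₁ S0 k H ≤ Ex G δ v₁ S0 (k + n) H := by
  induction n with
  | zero => simp
  | succ n ih =>
    rw [← add_assoc, Ex_succ]
    refine le_trans ?_ (Ex_mono G hδ v₁ S0 (k + n) _ _ h)
    rw [Ex_smul, pow_succ', mul_assoc]
    exact mul_le_mul_of_nonneg_left ih hr

end Chain

section Main

set_option linter.unusedSectionVars false

variable {V : Type} [Fintype V] [DecidableEq V]

open Matrix

/-- The kernel restricted to the edges of `F`. -/
def Qm (G : SimpleGraph V) [DecidableRel G.Adj] (δ : ℝ) (F : Finset (Sym2 V)) :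
    Matrix V V ℝ := fun x y => if s(x, y) ∈ F then phat G δ F x y else 0

theorem Qm_nonneg (G : SimpleGraph V) [DecidableRel G.Adj] {δ : ℝ} (hδ : 0 < δ)
    (F : Finset (Sym2 V)) (x y : V) : 0 ≤ Qm G δ F x y := by
  unfold Qm
  split_ifs
  · exact phat_nonneg G hδ F x y
  · exact le_rfl

theorem Qm_supp (G : SimpleGraph V) [DecidableRel G.Adj] (δ : ℝ)
    (F : Finset (Sym2 V)) (x y : V) (h : Qm G δ F x y ≠ 0) :
    memVerts F x ∧ memVerts F y := by
  unfold Qm at h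
  split_ifs at h with hF
  · exact ⟨⟨_, hF, by simp⟩, ⟨_, hF, by simp⟩⟩
  · exact absurd rfl h

theorem Qm_irr (G : SimpleGraph V) [DecidableRel G.Adj] {δ : ℝ} (hδ : 0 < δ) (v₁ : V)
    (F : Finset (Sym2 V)) (hF : F ∈ scrS G v₁) :
    ∀ x ∈ {x | memVerts F x}, ∀ y ∈ {x | memVerts F x},
      Relation.ReflTransGen (fun a b => 0 < Qm G δ F a b) x y := by
  intro x hx y hy
  have h := hF.2.2 x y hx hy
  rw [SimpleGraph.reachable_iff_reflTransGen] at h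
  refine Relation.ReflTransGen.mono (fun a b hab => ?_) x y h
  rw [SimpleGraph.fromEdgeSet_adj] at hab
  have hab1 : s(a, b) ∈ F := by simpa using hab.1
  have hadj : G.Adj a b := by
    have := hF.1 hab1
    simpa using this
  show 0 < Qm G δ F a b
  unfold Qm
  rw [if_pos hab1]
  exact phat_pos G hδ F hadj

theorem exists_exit (G : SimpleGraph V) [DecidableRel G.Adj] (hG : G.Connected) (v₁ : V)
    (F : Finset (Sym2 V)) (hF : F ∈ scrS G v₁) (hne : F ≠ G.edgeFinset) :
    ∃ x z, memVerts F x ∧ G.Adj x z ∧ s(x, z) ∉ F := by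
  by_contra hcon
  push Not at hcon
  apply hne
  refine Finset.Subset.antisymm hF.1 ?_
  obtain ⟨e, he, hv⟩ := hF.2.1
  have hall : ∀ y, memVerts F y := by
    intro y
    have hr := hG.preconnected v₁ y
    rw [SimpleGraph.reachable_iff_reflTransGen] at hr
    induction hr with
    | refl => exact ⟨e, he, hv⟩
    | tail _ hab ih => exact ⟨_, hcon _ _ ih hab, by simp⟩
  intro e'
  induction e' with
  | _ a b =>
    intro h
    exact hcon a b (hall a) (by simpa using h)

theorem perF (G : SimpleGraph V) [DecidableRel G.Adj] (hG : G.Connected) (v₁ : V)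
    {δ₁ δ₂ : ℝ} (h1 : 0 < δ₁) (h12 : δ₁ < δ₂)
    (F : Finset (Sym2 V)) (hF : F ∈ scrS G v₁) (hne : F ≠ G.edgeFinset) :
    ∃ s : ℝ, 0 ≤ s ∧ (∃ h : V → ℝ, (∀ x, 0 < h x) ∧ ∀ x, (Qm G δ₁ F *ᵥ h) x ≤ s * h x) ∧
      ∃ g : V → ℝ, (∀ x, memVerts F x → 0 < g x) ∧ (∀ x, ¬ memVerts F x → g x = 0) ∧
      ∃ ε > 0, ∀ x, (s + ε) * g x ≤ (Qm G δ₂ F *ᵥ g) x := by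
  have h2 : 0 < δ₂ := h1.trans h12
  obtain ⟨e, he, hv⟩ := hF.2.1
  obtain ⟨s, hs, h, hp, h0, heig⟩ := perron (Qm G δ₁ F) (Qm_nonneg G h1 F) {x | memVerts F x}
    (fun x y hq => (Qm_supp G δ₁ F x y hq).1) (Qm_irr G h1 v₁ F hF) ⟨v₁, e, he, hv⟩
  have hnn : ∀ x, 0 ≤ h x := fun x => by
    by_cases hx : memVerts F x
    · exact (hp x hx).le
    · exact (h0 x hx).ge
  refine ⟨s, hs, ⟨fun x => if memVerts F x then h x else 1, fun x => ?_, fun x => ?_⟩, ?_⟩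
  · show 0 < if memVerts F x then h x else 1
    split_ifs with hx
    · exact hp x hx
    · exact one_pos
  · have e1 : (Qm G δ₁ F *ᵥ fun x => if memVerts F x then h x else 1) x
        = (Qm G δ₁ F *ᵥ h) x := by
      show ∑ y, Qm G δ₁ F x y * (if memVerts F y then h y else 1) = ∑ y, Qm G δ₁ F x y * h y
      refine Finset.sum_congr rfl fun y _ => ?_
      by_cases hq : Qm G δ₁ F x y = 0
      · rw [hq, zero_mul, zero_mul]
      · rw [if_pos (Qm_supp G δ₁ F x y hq).2]
    rw [e1, heig]
    refine mul_le_mul_of_nonneg_left ?_ hs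
    show h x ≤ if memVerts F x then h x else 1
    split_ifs with hx
    · exact le_rfl
    · rw [h0 x hx]; exact zero_le_one
  · have hmono : ∀ x y, Qm G δ₁ F x y ≤ Qm G δ₂ F x y := by
      intro x y
      unfold Qm
      split_ifs with hxy
      · exact phat_mono G h1 h12 F hxy
      · exact le_rfl
    have hle : ∀ x y, Qm G δ₁ F x y * h y ≤ Qm G δ₂ F x y * h y := fun x y =>
      mul_le_mul_of_nonneg_right (hmono x y) (hnn y)
    obtain ⟨x0, z, hx0, hz, hzF⟩ := exists_exit G hG v₁ F hF hne
    obtain ⟨e', he', hxe'⟩ := hx0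
    obtain ⟨y, rfl⟩ := Sym2.mem_iff_exists.1 hxe'
    have hadj : G.Adj x0 y := by simpa using hF.1 he'
    refine improve (Qm G δ₂ F) (Qm_nonneg G h2 F) {x | memVerts F x}
      (fun x y hq => (Qm_supp G δ₂ F x y hq).1) (Qm_irr G h2 v₁ F hF) h hnn h0 s hs
      (fun x => ?_) x0 ?_
    · rw [← heig]
      exact Finset.sum_le_sum fun y _ => hle x y
    · rw [← heig]
      refine Finset.sum_lt_sum (fun y _ => hle x0 y) ⟨y, Finset.mem_univ _, ?_⟩
      refine mul_lt_mul_of_pos_right ?_ (hp y ⟨_, he', by simp⟩)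
      show Qm G δ₁ F x0 y < Qm G δ₂ F x0 y
      unfold Qm
      rw [if_pos he', if_pos he']
      exact phat_strict G h1 h12 F he' hadj hz hzF

theorem upper (G : SimpleGraph V) [DecidableRel G.Adj] (v₁ : V) {δ : ℝ} (hδ : 0 < δ)
    (S0 : Set (Finset (Sym2 V))) (r r' : ℝ) (hr : 0 ≤ r) (hr' : r < r')
    (hall : ∀ F, F ∈ S0 → ∃ h : V → ℝ, (∀ x, 0 < h x) ∧
      ∀ x, (Qm G δ F *ᵥ h) x ≤ r * h x) :
    ∃ C > 0, ∀ n, probTgt G δ v₁ S0 n ≤ C * r' ^ n := by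
  have hall' : ∀ F, ∃ h : V → ℝ, (∀ x, 0 < h x) ∧
      (F ∈ S0 → ∀ x, (Qm G δ F *ᵥ h) x ≤ r * h x) := by
    intro F
    by_cases hF : F ∈ S0
    · obtain ⟨h, ha, hb⟩ := hall F hF
      exact ⟨h, ha, fun _ => hb⟩
    · exact ⟨fun _ => 1, fun _ => one_pos, fun h => absurd h hF⟩
  choose h hpos hsup using hall'
  have hne : (Finset.univ : Finset (V × Finset (Sym2 V))).Nonempty := ⟨(v₁, ∅), Finset.mem_univ _⟩
  obtain ⟨⟨xM, FM⟩, -, hM⟩ := Finset.exists_max_image Finset.univ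
    (fun p : V × Finset (Sym2 V) => h p.2 p.1) hne
  obtain ⟨⟨xm, Fm⟩, -, hm⟩ := Finset.exists_min_image Finset.univ
    (fun p : V × Finset (Sym2 V) => h p.2 p.1) hne
  set C := h FM xM with hC
  set c := h Fm xm with hc
  have hCp : 0 < C := hpos _ _
  have hcp : 0 < c := hpos _ _
  have hleC : ∀ F x, h F x ≤ C := fun F x => hM (x, F) (Finset.mem_univ _)
  have hcle : ∀ F x, c ≤ h F x := fun F x => hm (x, F) (Finset.mem_univ _)
  have hcard : (0 : ℝ) < Fintype.card V := by
    have : Nonempty V := ⟨v₁⟩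
    exact_mod_cast Fintype.card_pos
  set η := (r' - r) * c / (Fintype.card V * C) with hη
  have hηp : 0 < η := div_pos (mul_pos (by linarith) hcp) (mul_pos hcard hCp)
  have hηe : Fintype.card V * (η * C) = (r' - r) * c := by
    rw [hη]; field_simp
  let H : V → Finset (Sym2 V) → ℝ := fun x F => η ^ F.card * h F x
  have hH : ∀ x F, opP G δ S0 H x F ≤ r' * H x F := by
    intro x F
    have hterm : ∀ y, (if insert s(x, y) F ∈ S0 then
        phat G δ F x y * H y (insert s(x, y) F) else 0) ≤
        η ^ F.card * ((if F ∈ S0 then Qm G δ F x y * h F y else 0) + η * C) := by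
      intro y
      have hrhs : 0 ≤ (if F ∈ S0 then Qm G δ F x y * h F y else 0) := by
        split_ifs
        · exact mul_nonneg (Qm_nonneg G hδ F x y) (hpos F y).le
        · exact le_rfl
      have hηF : 0 < η ^ F.card := pow_pos hηp _
      by_cases hxy : s(x, y) ∈ F
      · rw [Finset.insert_eq_of_mem hxy]
        split_ifs with hF
        · simp only [H, Qm, if_pos hxy]
          have : 0 ≤ η ^ F.card * (η * C) := by positivity
          nlinarith
        · positivity
      · have hcardi : (insert s(x, y) F).card = F.card + 1 := Finset.card_insert_of_notMem hxy
        have hR : 0 ≤ η ^ F.card * (if F ∈ S0 then Qm G δ F x y * h F y else 0) :=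
          mul_nonneg hηF.le hrhs
        have hR2 : 0 ≤ η ^ F.card * (η * C) := by positivity
        rw [mul_add]
        by_cases hI : insert s(x, y) F ∈ S0
        · rw [if_pos hI]
          have hH1 : H y (insert s(x, y) F) ≤ η ^ F.card * (η * C) := by
            simp only [H]
            rw [hcardi, pow_succ, mul_assoc]
            gcongr
            exact hleC _ _
          have hH0 : 0 ≤ H y (insert s(x, y) F) := mul_nonneg (pow_pos hηp _).le (hpos _ _).le
          have := mul_le_mul (phat_le_one G hδ F x y) hH1 hH0 zero_le_one
          linarith
        · rw [if_neg hI]; linarith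
    unfold opP
    refine (Finset.sum_le_sum fun y _ => hterm y).trans ?_
    rw [← Finset.mul_sum, Finset.sum_add_distrib, Finset.sum_const, Finset.card_univ,
      nsmul_eq_mul, hηe]
    have hs : ∑ y, (if F ∈ S0 then Qm G δ F x y * h F y else 0) ≤ r * h F x := by
      by_cases hF : F ∈ S0
      · simp only [if_pos hF]
        exact hsup F hF x
      · simp only [if_neg hF, Finset.sum_const_zero]
        exact mul_nonneg hr (hpos F x).le
    have h3 : (r' - r) * c ≤ (r' - r) * h F x :=
      mul_le_mul_of_nonneg_left (hcle F x) (by linarith)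
    have h4 := mul_le_mul_of_nonneg_left (add_le_add hs h3) (pow_pos hηp F.card).le
    refine h4.trans (le_of_eq ?_)
    simp only [H]; ring
  obtain ⟨⟨x', F'⟩, -, hm'⟩ := Finset.exists_min_image Finset.univ
    (fun p : V × Finset (Sym2 V) => H p.1 p.2) hne
  have hHpos : ∀ x F, 0 < H x F := fun x F => mul_pos (pow_pos hηp _) (hpos _ _)
  set d := H x' F' with hd
  have hdp : 0 < d := hHpos _ _
  refine ⟨d⁻¹ * H v₁ ∅, mul_pos (inv_pos.2 hdp) (hHpos _ _), fun n => ?_⟩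
  have hr0 : 0 ≤ r' := by linarith
  have hu := Ex_upper G hδ v₁ S0 H r' hr0 hH n
  have hl := Ex_mono G hδ v₁ S0 n (fun _ _ => 1) (fun x F => d⁻¹ * H x F) (fun x F => by
    rw [inv_mul_eq_div, le_div_iff₀ hdp, one_mul]
    exact hm' (x, F) (Finset.mem_univ _))
  rw [Ex_one, Ex_smul] at hl
  have := mul_le_mul_of_nonneg_left hu (inv_pos.2 hdp).le
  calc _ ≤ _ := hl
    _ ≤ _ := this
    _ = _ := by ring

/-- Invariant of the states of the walk. -/
def Inv (G : SimpleGraph V) [DecidableRel G.Adj] (v₁ : V) (x : V) (F : Finset (Sym2 V)) : Prop :=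
  (F = ∅ ∧ x = v₁) ∨ (F ∈ scrS G v₁ ∧ memVerts F x)

theorem Inv_step (G : SimpleGraph V) [DecidableRel G.Adj] (v₁ : V) {x y : V}
    {F : Finset (Sym2 V)} (h : Inv G v₁ x F) (hxy : G.Adj x y) :
    insert s(x, y) F ∈ scrS G v₁ ∧ memVerts (insert s(x, y) F) y := by
  have hmem : memVerts (insert s(x, y) F) y := ⟨_, Finset.mem_insert_self _ _, by simp⟩
  refine ⟨⟨?_, ?_, ?_⟩, hmem⟩
  · intro e he
    rcases Finset.mem_insert.1 he with rfl | he
    · simpa using hxy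
    · rcases h with ⟨rfl, -⟩ | ⟨hF, -⟩
      · simp at he
      · exact hF.1 he
  · rcases h with ⟨rfl, rfl⟩ | ⟨hF, -⟩
    · exact ⟨_, Finset.mem_insert_self _ _, by simp⟩
    · obtain ⟨e, he, hv⟩ := hF.2.1
      exact ⟨e, Finset.mem_insert_of_mem he, hv⟩
  · have key : ∀ w, memVerts (insert s(x, y) F) w →
        (SimpleGraph.fromEdgeSet (↑(insert s(x, y) F) : Set (Sym2 V))).Reachable x w := by
      rintro w ⟨e, he, hw⟩
      rcases Finset.mem_insert.1 he with rfl | he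
      · rcases Sym2.mem_iff.1 hw with rfl | rfl
        · exact SimpleGraph.Reachable.refl _
        · apply SimpleGraph.Adj.reachable
          rw [SimpleGraph.fromEdgeSet_adj]
          exact ⟨by simp, hxy.ne⟩
      · rcases h with ⟨rfl, -⟩ | ⟨hF, hx⟩
        · simp at he
        · refine SimpleGraph.Reachable.mono ?_ (hF.2.2 x w hx ⟨e, he, hw⟩)
          exact SimpleGraph.fromEdgeSet_mono (by simp)
    intro a b ha hb
    exact (key a ha).symm.trans (key b hb)

/-- Transition relation of the walk. -/
def Step (G : SimpleGraph V) (S0 : Set (Finset (Sym2 V)))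
    (p q : V × Finset (Sym2 V)) : Prop :=
  G.Adj p.1 q.1 ∧ q.2 = insert s(p.1, q.1) p.2 ∧ q.2 ∈ S0

theorem reach (G : SimpleGraph V) [DecidableRel G.Adj] (v₁ : V)
    (S0 : Set (Finset (Sym2 V))) (hsub : S0 ⊆ scrS G v₁) (hdec : DecreasingIn G v₁ S0)
    (F : Finset (Sym2 V)) (hF : F ∈ S0) :
    ∃ x, memVerts F x ∧ Relation.ReflTransGen (Step G S0) (v₁, ∅) (x, F) := by
  have hFS := hsub hF
  let P : Finset (Sym2 V) → Prop := fun F' => F' ⊆ F ∧ ∃ x, memVerts F x ∧ Inv G v₁ x F' ∧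
    Relation.ReflTransGen (Step G S0) (v₁, ∅) (x, F')
  have hne : (Finset.univ.filter P).Nonempty := by
    refine ⟨∅, Finset.mem_filter.2 ⟨Finset.mem_univ _, Finset.empty_subset _, v₁, hFS.2.1,
      Or.inl ⟨rfl, rfl⟩, Relation.ReflTransGen.refl⟩⟩
  obtain ⟨F', hF', hmax⟩ := Finset.exists_max_image _ Finset.card hne
  obtain ⟨-, hsubF, x, hx, hinv, hR⟩ := Finset.mem_filter.1 hF'
  have hstep : ∀ y z, Inv G v₁ y F' → Relation.ReflTransGen (Step G S0) (v₁, ∅) (y, F') →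
      s(y, z) ∈ F → s(y, z) ∈ F' ∧ Inv G v₁ z F' ∧
        Relation.ReflTransGen (Step G S0) (v₁, ∅) (z, F') := by
    intro y z hy hRy hyz
    have hadj : G.Adj y z := by simpa using hFS.1 hyz
    obtain ⟨ha, hb⟩ := Inv_step G v₁ hy hadj
    have hIs : insert s(y, z) F' ⊆ F := Finset.insert_subset hyz hsubF
    have hI0 : insert s(y, z) F' ∈ S0 := hdec _ _ ha hFS hIs hF
    have hR2 : Relation.ReflTransGen (Step G S0) (v₁, ∅) (z, insert s(y, z) F') :=
      hRy.tail ⟨hadj, rfl, hI0⟩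
    have hle := hmax (insert s(y, z) F') (Finset.mem_filter.2 ⟨Finset.mem_univ _, hIs, z,
      ⟨_, hyz, by simp⟩, Or.inr ⟨ha, hb⟩, hR2⟩)
    have hin : s(y, z) ∈ F' := by
      by_contra hc
      rw [Finset.card_insert_of_notMem hc] at hle
      omega
    rw [Finset.insert_eq_of_mem hin] at ha hb hR2
    exact ⟨hin, Or.inr ⟨ha, hb⟩, hR2⟩
  have hall : ∀ y, memVerts F y → Inv G v₁ y F' ∧
      Relation.ReflTransGen (Step G S0) (v₁, ∅) (y, F') := by
    intro y hy
    have hr := hFS.2.2 x y hx hy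
    rw [SimpleGraph.reachable_iff_reflTransGen] at hr
    clear hy
    induction hr with
    | refl => exact ⟨hinv, hR⟩
    | tail _ hab ih =>
      rw [SimpleGraph.fromEdgeSet_adj] at hab
      exact (hstep _ _ ih.1 ih.2 (by simpa using hab.1)).2
  have hEq : F' = F := by
    refine Finset.Subset.antisymm hsubF ?_
    intro e
    induction e with
    | _ a b =>
      intro he
      obtain ⟨h1, h2⟩ := hall a ⟨_, he, by simp⟩
      exact (hstep a b h1 h2 he).1
  subst hEq
  exact ⟨x, hx, hR⟩

theorem opP_iter_nonneg (G : SimpleGraph V) [DecidableRel G.Adj] {δ : ℝ} (hδ : 0 < δ)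
    (S0 : Set (Finset (Sym2 V))) (φ : V → Finset (Sym2 V) → ℝ) (hφ : ∀ x F, 0 ≤ φ x F)
    (k : ℕ) : ∀ x F, 0 ≤ (opP G δ S0)^[k] φ x F := by
  induction k with
  | zero => exact hφ
  | succ k ih =>
    intro x F
    rw [Function.iterate_succ_apply']
    refine Finset.sum_nonneg fun y _ => ?_
    split_ifs
    · exact mul_nonneg (phat_nonneg G hδ F x y) (ih _ _)
    · exact le_rfl

theorem opP_iter_pos (G : SimpleGraph V) [DecidableRel G.Adj] {δ : ℝ} (hδ : 0 < δ)
    (S0 : Set (Finset (Sym2 V))) (φ : V → Finset (Sym2 V) → ℝ) (hφ : ∀ x F, 0 ≤ φ x F)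
    (p q : V × Finset (Sym2 V)) (hpq : Relation.ReflTransGen (Step G S0) p q)
    (hq : 0 < φ q.1 q.2) : ∃ k, 0 < (opP G δ S0)^[k] φ p.1 p.2 := by
  induction hpq using Relation.ReflTransGen.head_induction_on with
  | refl => exact ⟨0, hq⟩
  | @head a b hab _ ih =>
    obtain ⟨k, hk⟩ := ih
    obtain ⟨hadj, he, hS⟩ := hab
    refine ⟨k + 1, ?_⟩
    rw [Function.iterate_succ_apply']
    refine Finset.sum_pos' (fun y _ => ?_) ⟨b.1, Finset.mem_univ _, ?_⟩
    · split_ifs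
      · exact mul_nonneg (phat_nonneg G hδ _ _ y) (opP_iter_nonneg G hδ S0 φ hφ k _ _)
      · exact le_rfl
    · rw [← he, if_pos hS]
      exact mul_pos (phat_pos G hδ _ hadj) hk

theorem lower (G : SimpleGraph V) [DecidableRel G.Adj] (v₁ : V) {δ : ℝ} (hδ : 0 < δ)
    (S0 : Set (Finset (Sym2 V))) (hsub : S0 ⊆ scrS G v₁) (hdec : DecreasingIn G v₁ S0)
    (F : Finset (Sym2 V)) (hF : F ∈ S0) (s : ℝ) (hs : 0 < s) (g : V → ℝ)
    (hg : ∀ x, memVerts F x → 0 < g x) (hg0 : ∀ x, ¬ memVerts F x → g x = 0)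
    (hgs : ∀ x, s * g x ≤ (Qm G δ F *ᵥ g) x) :
    ∃ c > 0, ∃ k, ∀ n, k ≤ n → c * s ^ n ≤ probTgt G δ v₁ S0 n := by
  have hgnn : ∀ x, 0 ≤ g x := fun x => by
    by_cases hx : memVerts F x
    · exact (hg x hx).le
    · exact (hg0 x hx).ge
  let φ : V → Finset (Sym2 V) → ℝ := fun x F' => if F' = F then g x else 0
  have hφ : ∀ x F', 0 ≤ φ x F' := fun x F' => by
    simp only [φ]; split_ifs
    · exact hgnn x
    · exact le_rfl
  have hsubs : ∀ x F', s * φ x F' ≤ opP G δ S0 φ x F' := by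
    intro x F'
    by_cases hFF : F' = F
    · subst hFF
      simp only [φ, if_true]
      refine (hgs x).trans ?_
      refine Finset.sum_le_sum fun y _ => ?_
      show Qm G δ F' x y * g y ≤ _
      by_cases hxy : s(x, y) ∈ F'
      · have e1 : Qm G δ F' x y = phat G δ F' x y := if_pos hxy
        rw [Finset.insert_eq_of_mem hxy, if_pos hF, e1]
        simp
      · have e1 : Qm G δ F' x y = 0 := if_neg hxy
        rw [e1, zero_mul]
        split_ifs
        · exact mul_nonneg (phat_nonneg G hδ _ _ y) (hφ y _)
        · exact le_rfl
    · have : φ x F' = 0 := if_neg hFF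
      rw [this, mul_zero]
      exact opP_iter_nonneg G hδ S0 φ hφ 1 x F'
  obtain ⟨x, hx, hR⟩ := reach G v₁ S0 hsub hdec F hF
  obtain ⟨k, hk⟩ := opP_iter_pos G hδ S0 φ hφ _ _ hR (by simpa [φ] using hg x hx)
  have hk' : 0 < Ex G δ v₁ S0 k φ := by rw [Ex_iter]; exact hk
  set M := ∑ y, g y with hM
  have hgM : ∀ y, g y ≤ M := fun y =>
    Finset.single_le_sum (fun z _ => hgnn z) (Finset.mem_univ y)
  have hMp : 0 < M := lt_of_lt_of_le (hg x hx) (hgM x)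
  refine ⟨M⁻¹ * (Ex G δ v₁ S0 k φ / s ^ k), by positivity, k, fun n hn => ?_⟩
  obtain ⟨m, rfl⟩ := Nat.exists_eq_add_of_le hn
  have h1 := Ex_lower G hδ v₁ S0 φ s hs.le hsubs k m
  have h2 := Ex_mono G hδ v₁ S0 (k + m) (fun x F => M⁻¹ * φ x F) (fun _ _ => 1) (fun y F' => by
    rw [inv_mul_eq_div, div_le_one hMp]
    simp only [φ]; split_ifs
    · exact hgM y
    · exact hMp.le)
  rw [Ex_one, Ex_smul] at h2
  refine le_trans ?_ h2
  have h3 := mul_le_mul_of_nonneg_left h1 (inv_pos.2 hMp).le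
  refine le_trans (le_of_eq ?_) h3
  rw [pow_add]
  field_simp

end Main

/-- Comparison of the tail probabilities of `T_{𝒮₀}` for two
reinforcement parameters `δ₁ < δ₂`. -/
theorem orrw_tail_comparison {V : Type} [Fintype V] [DecidableEq V]
    (G : SimpleGraph V) [DecidableRel G.Adj] (hG : G.Connected)
    (hV : 3 ≤ Fintype.card V) (v₁ : V) (δ₁ δ₂ : ℝ) (h1 : 0 < δ₁) (h12 : δ₁ < δ₂)
    (S0 : Set (Finset (Sym2 V))) (hS0ne : S0.Nonempty) (hS0sub : S0 ⊆ scrS G v₁)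
    (hS0dec : DecreasingIn G v₁ S0) (hS0ne' : S0 ≠ scrS G v₁) :
    ∃ N : ℕ, ∀ n : ℕ, N < n → probTgt G δ₁ v₁ S0 n < probTgt G δ₂ v₁ S0 n := by
  have h2 : 0 < δ₂ := h1.trans h12
  have hE : G.edgeFinset ∉ S0 := by
    intro hE
    apply hS0ne'
    exact Set.Subset.antisymm hS0sub fun F hF => hS0dec F _ hF (hS0sub hE) hF.1 hE
  have hper : ∀ F : Finset (Sym2 V), ∃ s : ℝ, F ∈ S0 → (0 ≤ s ∧
      (∃ h : V → ℝ, (∀ x, 0 < h x) ∧ ∀ x, (Matrix.mulVec (Qm G δ₁ F) h) x ≤ s * h x) ∧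
      ∃ g : V → ℝ, (∀ x, memVerts F x → 0 < g x) ∧ (∀ x, ¬ memVerts F x → g x = 0) ∧
      ∃ ε > 0, ∀ x, (s + ε) * g x ≤ (Matrix.mulVec (Qm G δ₂ F) g) x) := by
    intro F
    by_cases hF : F ∈ S0
    · obtain ⟨s, hs⟩ := perF G hG v₁ h1 h12 F (hS0sub hF) (fun h => hE (h ▸ hF))
      exact ⟨s, fun _ => hs⟩
    · exact ⟨0, fun h => absurd h hF⟩
  choose s hs using hper
  obtain ⟨F0, hF0⟩ := hS0ne
  obtain ⟨F, hFm, hmax⟩ := Finset.exists_max_image (Finset.univ.filter (fun F => F ∈ S0)) s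
    ⟨F0, Finset.mem_filter.2 ⟨Finset.mem_univ _, hF0⟩⟩
  have hF : F ∈ S0 := (Finset.mem_filter.1 hFm).2
  obtain ⟨hs0, -, g, hg, hg0, ε, hε, hgs⟩ := hs F hF
  obtain ⟨C, hC, hup⟩ := upper G v₁ h1 S0 (s F) (s F + ε / 2) hs0 (by linarith) (by
    intro F' hF'
    obtain ⟨-, ⟨h, hp, hh⟩, -⟩ := hs F' hF'
    exact ⟨h, hp, fun x => (hh x).trans (mul_le_mul_of_nonneg_right
      (hmax F' (Finset.mem_filter.2 ⟨Finset.mem_univ _, hF'⟩)) (hp x).le)⟩)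
  obtain ⟨c, hc, k, hlow⟩ := lower G v₁ h2 S0 hS0sub hS0dec F hF (s F + ε) (by linarith) g hg hg0
    hgs
  have hq0 : 0 ≤ (s F + ε / 2) / (s F + ε) := by positivity
  have hq1 : (s F + ε / 2) / (s F + ε) < 1 := by
    rw [div_lt_one (by linarith)]; linarith
  have ht := tendsto_pow_atTop_nhds_zero_of_lt_one hq0 hq1
  have hev := ht.eventually (gt_mem_nhds (div_pos hc hC))
  obtain ⟨N, hN⟩ := eventually_atTop.1 hev
  refine ⟨max N k, fun n hn => ?_⟩
  have hNn := hN n ((le_max_left _ _).trans hn.le)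
  refine lt_of_le_of_lt (hup n) (lt_of_lt_of_le ?_ (hlow n ((le_max_right _ _).trans hn.le)))
  rw [div_pow, div_lt_div_iff₀ (by positivity) hC] at hNn
  linarith

end ORRW
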